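/- Let k ≥ 1 be an integer and let r, r₁, r₂, r₃, r₄ be exponents with 1 < r, r₂, r₄ < ∞, 1 ≤ r₁, r₃ ≤ ∞, and 1/r₁ + 1/r₂ = 1/r₃ + 1/r₄ = 1/r. Then there exists a constant C > 0 such that for all Schwartz functions g, h : ℝ³ → ℝ the commutator satisfies ‖∇^k(gh) − g · ∇^k h‖_{L^r} ≤ C ‖∇g‖_{L^{r₁}} ‖∇^{k−1} h‖_{L^{r₂}} + C ‖h‖_{L^{r₃}} ‖∇^k g‖_{L^{r₄}}. -/

import Mathlib

open MeasureTheory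
open scoped NNReal ENNReal

/-!
The commutator `∇ᵏ(g h) - g(x) ∇ᵏh` at a point `x` is the `k`-th derivative there of
`(g - g(x)) h`, so by the Leibniz rule it is a sum of products of `∇ᵃ⁺¹g` and `∇ᵇh` with
`a + b = k - 1`. Hölder's inequality and two Gagliardo–Nirenberg interpolations, of `∇ᵃ(∇g)` between
`∇g` and `∇ᵏg` and of `∇ᵇh` between `h` and `∇ᵏ⁻¹h`, bound such a product by a weighted geometric
mean of the two terms on the right-hand side.

Gagliardo–Nirenberg says that `j ↦ ‖∇ʲf‖`, with reciprocal exponents affine in `j`, is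
logarithmically convex up to constants, which follows from its case of three consecutive orders,
`‖∇f‖² ≲ ‖f‖ ‖∇²f‖`. That holds pointwise (Landau's inequality) when the right-hand side is replaced
by the maximal functions of `|f|` and `|∇²f|`, and these are bounded on `Lᵖ` for `1 < p ≤ ∞`.
-/

section LayerCake

open Set

variable {α : Type*} [MeasurableSpace α] {μ : Measure α} {v w : α → ℝ≥0∞} {p : ℝ}

lemma lintegral_rpow_eq_lintegral_measure_lt_mul (hv : AEMeasurable v μ) (hv_top : ∀ x, v x ≠ ⊤)
    (hp : 0 < p) :
    ∫⁻ x, v x ^ p ∂μ =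
      ENNReal.ofReal p *
        ∫⁻ t in Ioi (0 : ℝ), μ {x | ENNReal.ofReal t < v x} * ENNReal.ofReal (t ^ (p - 1)) := by
  have hlt (t : ℝ) (ht : t ∈ Ioi 0) : {x | t < (v x).toReal} = {x | ENNReal.ofReal t < v x} := by
    ext x
    exact (ENNReal.ofReal_lt_iff_lt_toReal (mem_Ioi.1 ht).le (hv_top x)).symm
  rw [setLIntegral_congr_fun measurableSet_Ioi fun t ht ↦
      congrArg (fun s ↦ μ s * ENNReal.ofReal (t ^ (p - 1))) (hlt t ht).symm,
    ← lintegral_rpow_eq_lintegral_meas_lt_mul μ (.of_forall fun _ ↦ ENNReal.toReal_nonneg)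
      hv.ennreal_toReal hp]
  refine lintegral_congr fun x ↦ ?_
  rw [← ENNReal.ofReal_rpow_of_nonneg ENNReal.toReal_nonneg hp.le,
    ENNReal.ofReal_toReal (hv_top x)]

-- Doob's argument: integrate the weak-type bound against `p t ^ (p - 1) dt`; the inner integral
-- is a distribution function for the measure `w μ`.
lemma lintegral_rpow_le_of_mul_measure_lt_le_of_ne_top {A : ℝ≥0} (hp : 1 < p)
    (hv : AEMeasurable v μ) (hv_top : ∀ x, v x ≠ ⊤)
    (hw : AEMeasurable w μ) (hw_top : ∀ x, w x ≠ ⊤)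
    (h : ∀ l, l * μ {x | l < v x} ≤ A * ∫⁻ x in {x | l < w x}, w x ∂μ) :
    ∫⁻ x, v x ^ p ∂μ ≤
      ENNReal.ofReal p * A * (ENNReal.ofReal (p - 1))⁻¹ * ∫⁻ x, w x ^ p ∂μ := by
  have hp' : 0 < p - 1 := sub_pos.2 hp
  let ν := μ.withDensity w
  have hweak (t : ℝ) (ht : t ∈ Ioi 0) :
      μ {x | ENNReal.ofReal t < v x} * ENNReal.ofReal (t ^ (p - 1)) ≤
        A * (ν {x | ENNReal.ofReal t < w x} * ENNReal.ofReal (t ^ (p - 1 - 1))) := by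
    rw [withDensity_apply₀ _ (nullMeasurableSet_lt aemeasurable_const hw), ← mul_assoc]
    refine le_trans (le_of_eq ?_) (mul_le_mul_left (h (ENNReal.ofReal t)) _)
    rw [mul_right_comm, mul_comm, ← ENNReal.ofReal_mul (le_of_lt ht),
      ← Real.rpow_one_add' (le_of_lt ht) (by simpa using hp'.ne'), add_sub_cancel]
  have hν : ∫⁻ x, w x ^ (p - 1) ∂ν = ∫⁻ x, w x ^ p ∂μ := by
    rw [lintegral_withDensity_eq_lintegral_mul₀ hw (hw.pow_const _)]
    refine lintegral_congr fun x ↦ ?_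
    have := ENNReal.rpow_add_of_nonneg (x := w x) 1 (p - 1) zero_le_one hp'.le
    simpa using this.symm
  have hwν : AEMeasurable w ν := hw.mono_ac (withDensity_absolutelyContinuous μ w)
  have hofReal : (ENNReal.ofReal (p - 1))⁻¹ * ENNReal.ofReal (p - 1) = 1 :=
    ENNReal.inv_mul_cancel (by simpa using hp) ENNReal.ofReal_ne_top
  calc ∫⁻ x, v x ^ p ∂μ
      = ENNReal.ofReal p *
          ∫⁻ t in Ioi (0 : ℝ), μ {x | ENNReal.ofReal t < v x} * ENNReal.ofReal (t ^ (p - 1)) :=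
        lintegral_rpow_eq_lintegral_measure_lt_mul hv hv_top (zero_lt_one.trans hp)
    _ ≤ ENNReal.ofReal p * ∫⁻ t in Ioi (0 : ℝ),
          A * (ν {x | ENNReal.ofReal t < w x} * ENNReal.ofReal (t ^ (p - 1 - 1))) := by
        gcongr _ * ?_; exact setLIntegral_mono' measurableSet_Ioi hweak
    _ = ENNReal.ofReal p * A * ∫⁻ t in Ioi (0 : ℝ),
          ν {x | ENNReal.ofReal t < w x} * ENNReal.ofReal (t ^ (p - 1 - 1)) := by
        rw [lintegral_const_mul' _ _ ENNReal.coe_ne_top, mul_assoc]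
    _ = ENNReal.ofReal p * A * (ENNReal.ofReal (p - 1))⁻¹ * ∫⁻ x, w x ^ p ∂μ := by
        rw [← hν, lintegral_rpow_eq_lintegral_measure_lt_mul hwν hw_top hp']
        rw [← mul_assoc, mul_assoc _ _ (ENNReal.ofReal (p - 1)), hofReal, mul_one]

lemma lintegral_rpow_le_of_mul_measure_lt_le {A : ℝ≥0} (hp : 1 < p)
    (hv : AEMeasurable v μ) (hw : AEMeasurable w μ) (hw_top : ∀ x, w x ≠ ⊤)
    (h : ∀ l, l * μ {x | l < v x} ≤ A * ∫⁻ x in {x | l < w x}, w x ∂μ) :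
    ∫⁻ x, v x ^ p ∂μ ≤
      ENNReal.ofReal p * A * (ENNReal.ofReal (p - 1))⁻¹ * ∫⁻ x, w x ^ p ∂μ := by
  have hp₀ : 0 < p := zero_lt_one.trans hp
  have hmono : Monotone fun (n : ℕ) x ↦ min (v x) n ^ p := fun m n hmn x ↦ by
    dsimp only; gcongr
  have hsup (x : α) : v x ^ p = ⨆ n : ℕ, min (v x) n ^ p := by
    have hx : v x = ⨆ n : ℕ, min (v x) n := by
      simp only [← inf_iSup_eq, ENNReal.iSup_natCast, inf_top_eq]
    conv_lhs => rw [hx]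
    exact (ENNReal.orderIsoRpow p hp₀).map_iSup _
  simp only [hsup]
  rw [lintegral_iSup' (fun n ↦ (hv.min aemeasurable_const).pow_const p)
    (.of_forall fun x m n hmn ↦ hmono hmn x)]
  refine iSup_le fun n ↦ lintegral_rpow_le_of_mul_measure_lt_le_of_ne_top hp
    (hv.min aemeasurable_const) (fun x ↦ ?_) hw hw_top fun l ↦ le_trans ?_ (h l)
  · exact ((min_le_right _ _).trans_lt (ENNReal.natCast_lt_top n)).ne
  · have hsub : {x | l < min (v x) n} ⊆ {x | l < v x} := fun x hx ↦
      lt_of_lt_of_le (b := min (v x) n) hx (min_le_left _ _)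
    gcongr

end LayerCake

section MaximalFunction

open Metric Module Set

/-- The (uncentred) Hardy–Littlewood maximal function of an `ℝ≥0∞`-valued function; a ball that
contains `x` automatically has positive radius. -/
noncomputable def hardyLittlewoodMaximal {E : Type*} [PseudoMetricSpace E] [MeasurableSpace E]
    (μ : Measure E) (u : E → ℝ≥0∞) (x : E) : ℝ≥0∞ :=
  ⨆ (c : E) (ρ : ℝ) (_ : x ∈ ball c ρ), ⨍⁻ y in ball c ρ, u y ∂μ

section PseudoMetricSpace

variable {E : Type*} [PseudoMetricSpace E] [MeasurableSpace E] {μ : Measure E} {u v : E → ℝ≥0∞}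
  {l : ℝ≥0∞} {x : E}

lemma setLAverage_ball_le_hardyLittlewoodMaximal {c : E} {ρ : ℝ} (hx : x ∈ ball c ρ) :
    ⨍⁻ y in ball c ρ, u y ∂μ ≤ hardyLittlewoodMaximal μ u x :=
  le_iSup₂_of_le c ρ <| le_iSup_of_le hx le_rfl

lemma lt_hardyLittlewoodMaximal_iff :
    l < hardyLittlewoodMaximal μ u x ↔
      ∃ c ρ, x ∈ ball c ρ ∧ l < ⨍⁻ y in ball c ρ, u y ∂μ := by
  simp only [hardyLittlewoodMaximal, lt_iSup_iff, exists_prop]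

lemma isOpen_lt_hardyLittlewoodMaximal (μ : Measure E) (u : E → ℝ≥0∞) (l : ℝ≥0∞) :
    IsOpen {x | l < hardyLittlewoodMaximal μ u x} := by
  simp only [lt_hardyLittlewoodMaximal_iff, ofPred_exists, ofPred_and, ofPred_mem_eq]
  exact isOpen_iUnion fun c ↦ isOpen_iUnion fun ρ ↦ isOpen_ball.inter isOpen_const

lemma measurable_hardyLittlewoodMaximal [OpensMeasurableSpace E] (μ : Measure E)
    (u : E → ℝ≥0∞) : Measurable (hardyLittlewoodMaximal μ u) :=
  measurable_of_Ioi fun l ↦ (isOpen_lt_hardyLittlewoodMaximal μ u l).measurableSet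

lemma hardyLittlewoodMaximal_le_essSup : hardyLittlewoodMaximal μ u x ≤ essSup u μ :=
  iSup₂_le fun _ _ ↦ iSup_le fun _ ↦ setLAverage_le_essSup _ _

lemma hardyLittlewoodMaximal_le_add (h : ∀ y, u y ≤ v y + l) :
    hardyLittlewoodMaximal μ u x ≤ hardyLittlewoodMaximal μ v x + l := by
  refine iSup₂_le fun c ρ ↦ iSup_le fun hx ↦ ?_
  calc ⨍⁻ y in ball c ρ, u y ∂μ
      ≤ ⨍⁻ y in ball c ρ, (v y + l) ∂μ := setLAverage_mono_ae _ (.of_forall h)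
    _ = (⨍⁻ y in ball c ρ, v y ∂μ) + ⨍⁻ _ in ball c ρ, l ∂μ :=
        lintegral_add_right _ measurable_const
    _ ≤ hardyLittlewoodMaximal μ v x + l := by
        gcongr
        · exact setLAverage_ball_le_hardyLittlewoodMaximal hx
        · exact (laverage_le_essSup _).trans <| essSup_le_of_ae_le _ (.of_forall fun _ ↦ le_rfl)

end PseudoMetricSpace

variable {E : Type*} [NormedAddCommGroup E] [NormedSpace ℝ E] [FiniteDimensional ℝ E]
  [MeasurableSpace E] [BorelSpace E] {μ : Measure E} [μ.IsAddHaarMeasure]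

lemma addHaar_ball_mul_radius (c c' : E) {s : ℝ} (hs : 0 < s) (ρ : ℝ) :
    μ (ball c (s * ρ)) = ENNReal.ofReal (s ^ finrank ℝ E) * μ (ball c' ρ) := by
  rw [Measure.addHaar_ball_mul_of_pos μ c hs, Measure.addHaar_ball_center μ c']

lemma mul_measure_biUnion_ball_le_lintegral {t : Set (E × ℝ)} {R : ℝ}
    (hpos : ∀ b ∈ t, 0 < b.2) (hR : ∀ b ∈ t, b.2 ≤ R) {u : E → ℝ≥0∞} {l : ℝ≥0∞}
    (h : ∀ b ∈ t, l * μ (ball b.1 b.2) ≤ ∫⁻ y in ball b.1 b.2, u y ∂μ) :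
    l * μ (⋃ b ∈ t, ball b.1 b.2) ≤ 4 ^ finrank ℝ E * ∫⁻ y, u y ∂μ := by
  obtain ⟨s, hst, hdisj, hcover⟩ := Vitali.exists_disjoint_subfamily_covering_enlargement_ball
    t Prod.fst Prod.snd R hR 4 (by norm_num)
  have hs : s.Countable := hdisj.countable_of_isOpen (fun _ _ ↦ isOpen_ball)
    fun b hb ↦ nonempty_ball.2 (hpos b (hst hb))
  have hsub : ⋃ b ∈ t, ball b.1 b.2 ⊆ ⋃ b ∈ s, ball b.1 (4 * b.2) := by
    refine iUnion₂_subset fun b hb ↦ ?_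
    obtain ⟨b', hb', hbb'⟩ := hcover b hb
    exact hbb'.trans (subset_biUnion_of_mem (u := fun b : E × ℝ ↦ ball b.1 (4 * b.2)) hb')
  have hscale (b : E × ℝ) : μ (ball b.1 (4 * b.2)) = 4 ^ finrank ℝ E * μ (ball b.1 b.2) := by
    simp [addHaar_ball_mul_radius b.1 b.1 four_pos, ENNReal.ofReal_pow]
  have := hs.to_subtype
  calc l * μ (⋃ b ∈ t, ball b.1 b.2)
      ≤ l * ∑' b : s, μ (ball b.1.1 (4 * b.1.2)) := by
        gcongr; exact (measure_mono hsub).trans (measure_biUnion_le μ hs _)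
    _ = 4 ^ finrank ℝ E * ∑' b : s, l * μ (ball b.1.1 b.1.2) := by
        simp only [hscale, ENNReal.tsum_mul_left, mul_left_comm]
    _ ≤ 4 ^ finrank ℝ E * ∑' b : s, ∫⁻ y in ball b.1.1 b.1.2, u y ∂μ := by
        gcongr with b; exact h b (hst b.2)
    _ = 4 ^ finrank ℝ E * ∫⁻ y in ⋃ b ∈ s, ball b.1 b.2, u y ∂μ := by
        rw [lintegral_biUnion hs (fun _ _ ↦ measurableSet_ball) hdisj]
    _ ≤ 4 ^ finrank ℝ E * ∫⁻ y, u y ∂μ := by gcongr; exact Measure.restrict_le_self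

lemma mul_measure_lt_hardyLittlewoodMaximal_le (u : E → ℝ≥0∞) (l : ℝ≥0∞) :
    l * μ {x | l < hardyLittlewoodMaximal μ u x} ≤ 4 ^ finrank ℝ E * ∫⁻ y, u y ∂μ := by
  -- Vitali's covering lemma needs bounded radii, so exhaust by balls of radius at most `n`.
  let t (n : ℕ) : Set (E × ℝ) := {b | 0 < b.2 ∧ b.2 ≤ n ∧ l < ⨍⁻ y in ball b.1 b.2, u y ∂μ}
  have ht : Monotone fun n ↦ ⋃ b ∈ t n, ball b.1 b.2 := fun m n hmn ↦
    biUnion_subset_biUnion_left fun b hb ↦ ⟨hb.1, hb.2.1.trans (by exact_mod_cast hmn), hb.2.2⟩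
  have hsub : {x | l < hardyLittlewoodMaximal μ u x} ⊆ ⋃ n, ⋃ b ∈ t n, ball b.1 b.2 := by
    intro x hx
    obtain ⟨c, ρ, hxc, hl⟩ := lt_hardyLittlewoodMaximal_iff.1 hx
    obtain ⟨n, hn⟩ := exists_nat_ge ρ
    exact mem_iUnion.2 ⟨n, mem_iUnion₂.2 ⟨(c, ρ), ⟨pos_of_mem_ball hxc, hn, hl⟩, hxc⟩⟩
  calc l * μ {x | l < hardyLittlewoodMaximal μ u x}
      ≤ ⨆ n, l * μ (⋃ b ∈ t n, ball b.1 b.2) := by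
        rw [← ENNReal.mul_iSup, ← ht.measure_iUnion]; gcongr
    _ ≤ 4 ^ finrank ℝ E * ∫⁻ y, u y ∂μ := by
        refine iSup_le fun n ↦ mul_measure_biUnion_ball_le_lintegral (fun b hb ↦ hb.1)
          (fun b hb ↦ hb.2.1) fun b hb ↦ ?_
        rw [← measure_mul_setLAverage _ measure_ball_lt_top.ne, mul_comm]
        gcongr
        exact hb.2.2.le

lemma mul_measure_lt_hardyLittlewoodMaximal_le_setLIntegral {u : E → ℝ≥0∞}
    (hu : AEMeasurable u μ) (l : ℝ≥0∞) :
    l * μ {x | l < hardyLittlewoodMaximal μ u x} ≤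
      4 ^ finrank ℝ E * ∫⁻ y in {y | l < 2 * u y}, 2 * u y ∂μ := by
  let v : E → ℝ≥0∞ := {y | l < 2 * u y}.indicator u
  have huv (y : E) : u y ≤ v y + l / 2 := by
    by_cases hy : l < 2 * u y
    · simp [v, hy]
    · rw [not_lt, mul_comm] at hy
      exact (ENNReal.le_div_iff_mul_le (by simp) (by simp)).2 hy |>.trans le_add_self
  have hsub : {x | l < hardyLittlewoodMaximal μ u x} ⊆
      {x | l / 2 < hardyLittlewoodMaximal μ v x} := fun x hx ↦ by
    have := lt_of_lt_of_le ((ENNReal.add_halves l).symm ▸ hx) (hardyLittlewoodMaximal_le_add huv)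
    exact lt_of_add_lt_add_right this
  have hv : 2 * ∫⁻ y, v y ∂μ = ∫⁻ y in {y | l < 2 * u y}, 2 * u y ∂μ := by
    rw [lintegral_indicator₀ (nullMeasurableSet_lt aemeasurable_const (hu.const_mul 2)),
      lintegral_const_mul'' _ hu.restrict]
  calc l * μ {x | l < hardyLittlewoodMaximal μ u x}
      ≤ l * μ {x | l / 2 < hardyLittlewoodMaximal μ v x} := by gcongr
    _ = 2 * (l / 2 * μ {x | l / 2 < hardyLittlewoodMaximal μ v x}) := by
        rw [← mul_assoc, ENNReal.mul_div_cancel (by simp) (by simp)]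
    _ ≤ 2 * (4 ^ finrank ℝ E * ∫⁻ y, v y ∂μ) := by
        gcongr 2 * ?_; exact mul_measure_lt_hardyLittlewoodMaximal_le v (l / 2)
    _ = 4 ^ finrank ℝ E * ∫⁻ y in {y | l < 2 * u y}, 2 * u y ∂μ := by
        rw [mul_left_comm, hv]

variable (μ) in
lemma eLpNorm_hardyLittlewoodMaximal_le {p : ℝ≥0∞} (hp : 1 < p) :
    ∃ C : ℝ≥0, ∀ u : E → ℝ≥0∞, AEMeasurable u μ → (∀ x, u x ≠ ⊤) →
      eLpNorm (hardyLittlewoodMaximal μ u) p μ ≤ C * eLpNorm u p μ := by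
  rcases eq_or_ne p ⊤ with rfl | hp_top
  · refine ⟨1, fun u _ _ ↦ ?_⟩
    rw [eLpNorm_exponent_top, eLpNorm_exponent_top, ENNReal.coe_one, one_mul]
    exact essSup_le_of_ae_le _ (.of_forall fun x ↦ hardyLittlewoodMaximal_le_essSup)
  have hp' : 1 < p.toReal := by simpa using ENNReal.toReal_strict_mono hp_top hp
  have hp₀ : p ≠ 0 := (zero_lt_one.trans hp).ne'
  let A : ℝ≥0∞ := ENNReal.ofReal p.toReal * (4 ^ finrank ℝ E : ℝ≥0) *
    (ENNReal.ofReal (p.toReal - 1))⁻¹ * 2 ^ p.toReal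
  have hA_top : A ≠ ⊤ := by
    have : (ENNReal.ofReal (p.toReal - 1))⁻¹ ≠ ⊤ := by simpa using hp'
    finiteness
  refine ⟨(A ^ (1 / p.toReal)).toNNReal, fun u hu hu_top ↦ ?_⟩
  rw [ENNReal.coe_toNNReal (by finiteness), eLpNorm_eq_lintegral_rpow_enorm_toReal hp₀ hp_top,
    eLpNorm_eq_lintegral_rpow_enorm_toReal hp₀ hp_top,
    ← ENNReal.mul_rpow_of_nonneg _ _ (by positivity)]
  gcongr
  have := lintegral_rpow_le_of_mul_measure_lt_le (A := 4 ^ finrank ℝ E) hp'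
    (measurable_hardyLittlewoodMaximal μ u).aemeasurable
    (hu.const_mul 2) (fun x ↦ ENNReal.mul_ne_top (by simp) (hu_top x))
    (by simpa using mul_measure_lt_hardyLittlewoodMaximal_le_setLIntegral hu)
  simpa only [ENNReal.mul_rpow_of_nonneg _ _ ENNReal.toReal_nonneg, A, enorm_eq_self, mul_assoc,
    lintegral_const_mul' _ _ (ENNReal.rpow_ne_top_of_nonneg ENNReal.toReal_nonneg
      ENNReal.ofNat_ne_top)] using this

end MaximalFunction

section LandauInequality

open Metric Module Set

variable {E F : Type*} [NormedAddCommGroup E] [NormedSpace ℝ E] [NormedAddCommGroup F]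
  [NormedSpace ℝ F] {f : E → F}

lemma enorm_taylor_remainder_le [CompleteSpace F] (hf : ContDiff ℝ 2 f) (x z : E) :
    ‖f (x + z) - f x - fderiv ℝ f x z‖ₑ ≤
      ‖z‖ₑ ^ 2 * ∫⁻ s in Ioc (0 : ℝ) 1, ‖iteratedFDeriv ℝ 2 f (x + s • z)‖ₑ := by
  have htaylor : f (x + z) - f x - fderiv ℝ f x z =
      ∫ s in (0 : ℝ)..1, (1 - s) • iteratedFDeriv ℝ 2 f (x + s • z) fun _ ↦ z := by
    have := map_add_eq_sum_add_integral_iteratedFDeriv (f := f) (x := x) (y := z) (n := 1)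
      fun t _ ↦ hf.contDiffAt
    simp only [Finset.sum_range_succ, Finset.sum_range_zero, iteratedFDeriv_zero_apply,
      iteratedFDeriv_one_apply, Nat.factorial, Nat.cast_one, inv_one, one_smul, pow_one,
      zero_add, mul_one] at this
    rw [this]
    abel
  have hpointwise : ∀ s ∈ Ioc (0 : ℝ) 1,
      ‖(1 - s) • iteratedFDeriv ℝ 2 f (x + s • z) fun _ ↦ z‖ ≤
        ‖z‖ ^ 2 * ‖iteratedFDeriv ℝ 2 f (x + s • z)‖ := fun s hs ↦ by
    have hs' : ‖1 - s‖ ≤ 1 := by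
      rw [Real.norm_eq_abs, abs_le]
      constructor <;> linarith [hs.1, hs.2]
    rw [norm_smul, mul_comm (‖z‖ ^ 2)]
    exact (mul_le_of_le_one_left (norm_nonneg _) hs').trans <| by
      simpa using (iteratedFDeriv ℝ 2 f (x + s • z)).le_opNorm fun _ ↦ z
  rw [htaylor, intervalIntegral.integral_of_le zero_le_one, ← lintegral_const_mul' _ _ (by simp)]
  refine (enorm_integral_le_lintegral_enorm _).trans <|
    setLIntegral_mono' measurableSet_Ioc fun s hs ↦ ?_
  simpa only [← enorm_norm (iteratedFDeriv ℝ 2 f _), ← enorm_norm z, ← enorm_pow, ← enorm_mul,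
    norm_mul, norm_pow, norm_norm] using enorm_le_iff_norm_le.2 (by simpa using hpointwise s hs)

lemma setLIntegral_ball_comp_add_right_le {E : Type*} [NormedAddCommGroup E]
    [MeasurableSpace E] [BorelSpace E] (μ : Measure E) [μ.IsAddRightInvariant]
    {u : E → ℝ≥0∞} (hu : Measurable u) {w : E} {t : ℝ}
    (hw : ‖w‖ ≤ t) :
    ∫⁻ y in ball 0 t, u (y + w) ∂μ ≤ ∫⁻ z in ball 0 (2 * t), u z ∂μ := by
  have hsub : ball 0 t ⊆ (· + w) ⁻¹' ball 0 (2 * t) := fun y hy ↦ by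
    rw [mem_preimage, mem_ball_zero_iff]
    linarith [norm_add_le y w, mem_ball_zero_iff.1 hy]
  calc ∫⁻ y in ball 0 t, u (y + w) ∂μ
      ≤ ∫⁻ y in (· + w) ⁻¹' ball 0 (2 * t), u (y + w) ∂μ := lintegral_mono_set hsub
    _ = ∫⁻ z in ball 0 (2 * t), u z ∂μ :=
        (measurePreserving_add_right μ w).setLIntegral_comp_preimage measurableSet_ball hu

variable [FiniteDimensional ℝ E] [MeasurableSpace E] [BorelSpace E] (μ : Measure E)
  [μ.IsAddHaarMeasure]

lemma map_add_smul_addHaar (x : E) {s : ℝ} (hs : 0 < s) :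
    μ.map (fun z ↦ x + s • z) = (ENNReal.ofReal (s ^ finrank ℝ E))⁻¹ • μ := by
  have hcomp : (fun z ↦ x + s • z) = (x + ·) ∘ (s • ·) := rfl
  rw [hcomp, ← Measure.map_map (measurable_const_add x) (measurable_const_smul s),
    Measure.map_addHaar_smul μ hs.ne', Measure.map_smul, map_add_left_eq_self,
    abs_of_pos (by positivity), ENNReal.ofReal_inv_of_pos (by positivity)]

lemma setLIntegral_ball_comp_add_smul_le {u : E → ℝ≥0∞} (hu : Measurable u) (x : E) {s ρ : ℝ}
    (hs : 0 < s) (hρ : 0 < ρ) :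
    ∫⁻ z in ball 0 ρ, u (x + s • z) ∂μ ≤ μ (ball 0 ρ) * hardyLittlewoodMaximal μ u x := by
  have hball : (fun z ↦ x + s • z) ⁻¹' ball x (s * ρ) = ball 0 ρ := by
    ext z
    simp [norm_smul, abs_of_pos hs, hs]
  have hmeas : Measurable fun z : E ↦ x + s • z := by fun_prop
  calc ∫⁻ z in ball 0 ρ, u (x + s • z) ∂μ
      = (ENNReal.ofReal (s ^ finrank ℝ E))⁻¹ * ∫⁻ y in ball x (s * ρ), u y ∂μ := by
        rw [← hball, ← setLIntegral_map measurableSet_ball hu hmeas, map_add_smul_addHaar μ x hs,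
          Measure.restrict_smul, lintegral_smul_measure, smul_eq_mul]
    _ = μ (ball 0 ρ) * ⨍⁻ y in ball x (s * ρ), u y ∂μ := by
        rw [← measure_mul_setLAverage _ measure_ball_lt_top.ne,
          addHaar_ball_mul_radius x 0 hs, mul_assoc, ← mul_assoc,
          ENNReal.inv_mul_cancel (ENNReal.ofReal_pos.2 (by positivity)).ne'
            ENNReal.ofReal_ne_top, one_mul]
    _ ≤ μ (ball 0 ρ) * hardyLittlewoodMaximal μ u x := by
        gcongr
        exact setLAverage_ball_le_hardyLittlewoodMaximal (mem_ball_self (mul_pos hs hρ))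

lemma setLIntegral_ball_enorm_taylor_remainder_le [CompleteSpace F] (hf : ContDiff ℝ 2 f) (x : E)
    {ρ : ℝ} (hρ : 0 < ρ) :
    ∫⁻ z in ball 0 ρ, ‖f (x + z) - f x - fderiv ℝ f x z‖ₑ ∂μ ≤
      μ (ball 0 ρ) * (ENNReal.ofReal ρ ^ 2 *
        hardyLittlewoodMaximal μ (fun y ↦ ‖iteratedFDeriv ℝ 2 f y‖ₑ) x) := by
  have hcont : Continuous (iteratedFDeriv ℝ 2 f) := hf.continuous_iteratedFDeriv le_rfl
  have hmeas : Measurable (Function.uncurry fun (z : E) (s : ℝ) ↦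
      ‖iteratedFDeriv ℝ 2 f (x + s • z)‖ₑ) := by
    refine Continuous.measurable ?_
    unfold Function.uncurry
    fun_prop
  calc ∫⁻ z in ball 0 ρ, ‖f (x + z) - f x - fderiv ℝ f x z‖ₑ ∂μ
      ≤ ∫⁻ z in ball 0 ρ, ENNReal.ofReal ρ ^ 2 *
          (∫⁻ s in Ioc (0 : ℝ) 1, ‖iteratedFDeriv ℝ 2 f (x + s • z)‖ₑ) ∂μ := by
        refine setLIntegral_mono' measurableSet_ball fun z hz ↦ ?_
        refine (enorm_taylor_remainder_le hf x z).trans ?_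
        gcongr
        rw [← ofReal_norm]
        exact ENNReal.ofReal_le_ofReal (mem_ball_zero_iff.1 hz).le
    _ = ENNReal.ofReal ρ ^ 2 *
          ∫⁻ s in Ioc (0 : ℝ) 1, ∫⁻ z in ball 0 ρ, ‖iteratedFDeriv ℝ 2 f (x + s • z)‖ₑ ∂μ := by
        rw [lintegral_const_mul' _ _ (by finiteness), lintegral_lintegral_swap hmeas.aemeasurable]
    _ ≤ ENNReal.ofReal ρ ^ 2 * ∫⁻ _ in Ioc (0 : ℝ) 1, μ (ball 0 ρ) *
          hardyLittlewoodMaximal μ (fun y ↦ ‖iteratedFDeriv ℝ 2 f y‖ₑ) x := by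
        gcongr _ * ?_
        exact setLIntegral_mono' measurableSet_Ioc fun s hs ↦
          setLIntegral_ball_comp_add_smul_le μ hcont.enorm.measurable x hs.1 hρ
    _ = _ := by simp [mul_left_comm]

-- `t • Df(x) v` is the difference over `y ↦ y + t • v` of `f (x + y)` minus its Taylor remainder;
-- average over `y` in the ball of radius `t`.
lemma ofReal_mul_enorm_fderiv_apply_le [CompleteSpace F] (hf : ContDiff ℝ 2 f) (x : E) {v : E}
    (hv : ‖v‖ ≤ 1) {t : ℝ} (ht : 0 < t) :
    ENNReal.ofReal t * ‖fderiv ℝ f x v‖ₑ ≤ 2 ^ (finrank ℝ E + 1) *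
      (hardyLittlewoodMaximal μ (fun y ↦ ‖f y‖ₑ) x + ENNReal.ofReal (2 * t) ^ 2 *
        hardyLittlewoodMaximal μ (fun y ↦ ‖iteratedFDeriv ℝ 2 f y‖ₑ) x) := by
  set S : ℝ≥0∞ := hardyLittlewoodMaximal μ (fun y ↦ ‖f y‖ₑ) x + ENNReal.ofReal (2 * t) ^ 2 *
    hardyLittlewoodMaximal μ (fun y ↦ ‖iteratedFDeriv ℝ 2 f y‖ₑ) x with hS
  let R (z : E) : F := f (x + z) - f x - fderiv ℝ f x z
  let G (z : E) : ℝ≥0∞ := ‖f (x + z)‖ₑ + ‖R z‖ₑ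
  have hfc : Continuous f := hf.continuous
  have hR : Continuous R := by fun_prop
  have hG : Measurable G := by dsimp only [G]; fun_prop
  have hdiff (y : E) : ENNReal.ofReal t * ‖fderiv ℝ f x v‖ₑ ≤ G (y + t • v) + G y := by
    have : t • fderiv ℝ f x v = (f (x + (y + t • v)) - R (y + t • v)) - (f (x + y) - R y) := by
      simp only [R, map_add, map_smul]; abel
    rw [← Real.enorm_of_nonneg ht.le, ← enorm_smul, this]
    exact enorm_sub_le.trans (add_le_add enorm_sub_le enorm_sub_le)
  have hG_le : ∫⁻ z in ball 0 (2 * t), G z ∂μ ≤ μ (ball 0 (2 * t)) * S := by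
    rw [lintegral_add_right _ hR.enorm.measurable, hS, mul_add]
    gcongr
    · simpa using setLIntegral_ball_comp_add_smul_le μ hfc.enorm.measurable x one_pos
        (mul_pos two_pos ht)
    · exact setLIntegral_ball_enorm_taylor_remainder_le μ hf x (mul_pos two_pos ht)
  have htv : ‖t • v‖ ≤ t := by
    rw [norm_smul, Real.norm_of_nonneg ht.le]
    exact mul_le_of_le_one_right ht.le hv
  have hint : μ (ball 0 t) * (ENNReal.ofReal t * ‖fderiv ℝ f x v‖ₑ) ≤
      μ (ball 0 t) * (2 ^ (finrank ℝ E + 1) * S) :=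
    calc μ (ball 0 t) * (ENNReal.ofReal t * ‖fderiv ℝ f x v‖ₑ)
        = ∫⁻ _ in ball 0 t, ENNReal.ofReal t * ‖fderiv ℝ f x v‖ₑ ∂μ := by
          rw [setLIntegral_const, mul_comm]
      _ ≤ ∫⁻ y in ball 0 t, (G (y + t • v) + G y) ∂μ := lintegral_mono hdiff
      _ ≤ ∫⁻ z in ball 0 (2 * t), G z ∂μ + ∫⁻ z in ball 0 (2 * t), G z ∂μ := by
          rw [lintegral_add_right _ hG]
          exact add_le_add (setLIntegral_ball_comp_add_right_le μ hG htv)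
            (lintegral_mono_set (ball_subset_ball (by linarith)))
      _ ≤ μ (ball 0 (2 * t)) * S + μ (ball 0 (2 * t)) * S := add_le_add hG_le hG_le
      _ = μ (ball 0 t) * (2 ^ (finrank ℝ E + 1) * S) := by
          rw [addHaar_ball_mul_radius 0 0 two_pos, ENNReal.ofReal_pow two_pos.le,
            ENNReal.ofReal_ofNat]
          ring
  exact (ENNReal.mul_le_mul_iff_right (measure_ball_pos μ 0 ht).ne' measure_ball_lt_top.ne).1 hint

lemma sq_le_four_mul_of_forall_mul_le {a b d : ℝ} (ha : 0 ≤ a) (hb : 0 ≤ b) (hd : 0 ≤ d)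
    (h : ∀ t, 0 < t → d * t ≤ a + b * t ^ 2) : d ^ 2 ≤ 4 * a * b := by
  have : discrim b (-d) a ≤ 0 := discrim_le_zero fun t ↦ by
    rcases le_or_gt t 0 with ht | ht
    · nlinarith [mul_nonneg hb (mul_self_nonneg t)]
    · linarith [h t ht]
  rw [discrim] at this
  linarith

lemma enorm_fderiv_sq_le_hardyLittlewoodMaximal_mul [CompleteSpace F] (hf : ContDiff ℝ 2 f) {x : E}
    (h₀ : hardyLittlewoodMaximal μ (fun y ↦ ‖f y‖ₑ) x ≠ ⊤)
    (h₂ : hardyLittlewoodMaximal μ (fun y ↦ ‖iteratedFDeriv ℝ 2 f y‖ₑ) x ≠ ⊤) :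
    ‖fderiv ℝ f x‖ₑ ^ 2 ≤ 4 ^ (finrank ℝ E + 3) * (hardyLittlewoodMaximal μ (fun y ↦ ‖f y‖ₑ) x *
      hardyLittlewoodMaximal μ (fun y ↦ ‖iteratedFDeriv ℝ 2 f y‖ₑ) x) := by
  have hlandau (v : E) (hv : ‖v‖ = 1) (t : ℝ) (ht : 0 < t) :=
    ofReal_mul_enorm_fderiv_apply_le μ hf x hv.le ht
  lift hardyLittlewoodMaximal μ (fun y ↦ ‖f y‖ₑ) x to ℝ≥0 using h₀ with A
  lift hardyLittlewoodMaximal μ (fun y ↦ ‖iteratedFDeriv ℝ 2 f y‖ₑ) x to ℝ≥0 using h₂ with B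
  set K : ℝ := 2 ^ (finrank ℝ E + 1) with hK
  have hquad (t : ℝ) (ht : 0 < t) : ‖fderiv ℝ f x‖ * t ≤ K * A + 4 * K * B * t ^ 2 := by
    rw [← le_div_iff₀ ht]
    refine ContinuousLinearMap.opNorm_le_of_unit_norm (𝕜 := ℝ) (by positivity) fun v hv ↦ ?_
    rw [le_div_iff₀' ht]
    have := ENNReal.toReal_mono (by finiteness) (hlandau v hv t ht)
    rw [ENNReal.toReal_mul, ENNReal.toReal_mul, ENNReal.toReal_add (by finiteness) (by finiteness)]
      at this
    simp only [ENNReal.toReal_mul, ENNReal.toReal_ofReal ht.le, toReal_enorm, ENNReal.toReal_pow,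
      ENNReal.toReal_ofNat, ENNReal.toReal_ofReal (mul_pos two_pos ht).le, ENNReal.coe_toReal,
      ← hK] at this
    linarith
  have hsq : ‖fderiv ℝ f x‖ ^ 2 ≤ 4 ^ (finrank ℝ E + 3) * (A * B) := by
    have hK_sq : 16 * K ^ 2 = 4 ^ (finrank ℝ E + 3) := by
      rw [hK, ← pow_mul, mul_comm _ 2, pow_mul, show (2 : ℝ) ^ 2 = 4 by norm_num]; ring
    rw [← hK_sq]
    linarith [sq_le_four_mul_of_forall_mul_le (by positivity) (by positivity) (norm_nonneg _) hquad]
  have hsq' : ‖fderiv ℝ f x‖₊ ^ 2 ≤ 4 ^ (finrank ℝ E + 3) * (A * B) := by exact_mod_cast hsq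
  rw [enorm_eq_nnnorm]
  exact_mod_cast hsq'

lemma ae_lt_top_of_eLpNorm_ne_top {α : Type*} [MeasurableSpace α] {μ : Measure α} {p : ℝ≥0∞}
    {v : α → ℝ≥0∞} (hv : AEMeasurable v μ) (hp : p ≠ 0) (h : eLpNorm v p μ ≠ ⊤) :
    ∀ᵐ x ∂μ, v x < ⊤ := by
  rcases eq_or_ne p ⊤ with rfl | hp_top
  · rw [eLpNorm_exponent_top] at h
    exact ae_lt_of_essSup_lt h.lt_top
  · have hp₀ := ENNReal.toReal_pos hp hp_top
    filter_upwards [ae_lt_top' (hv.pow_const _)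
      (lintegral_rpow_enorm_lt_top_of_eLpNorm_lt_top hp hp_top h.lt_top).ne] with x hx
    exact (ENNReal.rpow_lt_top_iff_of_pos hp₀).1 hx

lemma eLpNorm_norm_sq {α G : Type*} [MeasurableSpace α] [NormedAddCommGroup G] {μ : Measure α}
    (g : α → G) (r : ℝ≥0∞) : eLpNorm (fun x ↦ ‖g x‖ ^ 2) (r / 2) μ = eLpNorm g r μ ^ 2 := by
  have := eLpNorm_norm_rpow (p := r / 2) (μ := μ) g two_pos
  simpa [ENNReal.div_mul_cancel] using this

lemma eLpNorm_toReal_le {α : Type*} [MeasurableSpace α] {μ : Measure α} (v : α → ℝ≥0∞)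
    (p : ℝ≥0∞) : eLpNorm (fun x ↦ (v x).toReal) p μ ≤ eLpNorm v p μ :=
  eLpNorm_mono_enorm fun x ↦ by
    rw [Real.enorm_of_nonneg ENNReal.toReal_nonneg]
    exact ENNReal.ofReal_toReal_le

lemma ae_hardyLittlewoodMaximal_enorm_lt_top {G : Type*} [NormedAddCommGroup G] {p : ℝ≥0∞}
    (hp : 1 < p) {g : E → G} (hg : MemLp g p μ) :
    ∀ᵐ x ∂μ, hardyLittlewoodMaximal μ (fun y ↦ ‖g y‖ₑ) x < ⊤ := by
  obtain ⟨C, hC⟩ := eLpNorm_hardyLittlewoodMaximal_le μ hp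
  have hle : eLpNorm (hardyLittlewoodMaximal μ fun y ↦ ‖g y‖ₑ) p μ ≤ C * eLpNorm g p μ := by
    simpa only [eLpNorm_enorm] using hC _ hg.1.enorm fun x ↦ by finiteness
  exact ae_lt_top_of_eLpNorm_ne_top (measurable_hardyLittlewoodMaximal μ _).aemeasurable
    (zero_lt_one.trans hp).ne' (ne_top_of_le_ne_top (by have := hg.eLpNorm_ne_top; finiteness) hle)

lemma eLpNorm_iteratedFDeriv_one_sq_le [CompleteSpace F] {p q r : ℝ≥0∞} (hp : 1 < p) (hq : 1 < q)
    (hpqr : p⁻¹ + q⁻¹ = 2 * r⁻¹) :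
    ∃ C : ℝ≥0, ∀ f : E → F, ContDiff ℝ 2 f → MemLp f p μ → MemLp (iteratedFDeriv ℝ 2 f) q μ →
      eLpNorm (iteratedFDeriv ℝ 1 f) r μ ^ 2 ≤
        C * (eLpNorm f p μ * eLpNorm (iteratedFDeriv ℝ 2 f) q μ) := by
  obtain ⟨C₀, hC₀⟩ := eLpNorm_hardyLittlewoodMaximal_le μ hp
  obtain ⟨C₂, hC₂⟩ := eLpNorm_hardyLittlewoodMaximal_le μ hq
  refine ⟨4 ^ (finrank ℝ E + 3) * (C₀ * C₂), fun f hf hfp hfq ↦ ?_⟩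
  let M₀ := hardyLittlewoodMaximal μ fun y ↦ ‖f y‖ₑ
  let M₂ := hardyLittlewoodMaximal μ fun y ↦ ‖iteratedFDeriv ℝ 2 f y‖ₑ
  have hM₀ : Measurable M₀ := measurable_hardyLittlewoodMaximal μ _
  have hM₂ : Measurable M₂ := measurable_hardyLittlewoodMaximal μ _
  have hM₀_le : eLpNorm M₀ p μ ≤ C₀ * eLpNorm f p μ := by
    simpa only [eLpNorm_enorm] using hC₀ _ hfp.1.enorm fun x ↦ by finiteness
  have hM₂_le : eLpNorm M₂ q μ ≤ C₂ * eLpNorm (iteratedFDeriv ℝ 2 f) q μ := by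
    simpa only [eLpNorm_enorm] using hC₂ _ hfq.1.enorm fun x ↦ by finiteness
  have hlandau : ∀ᵐ x ∂μ, ‖‖iteratedFDeriv ℝ 1 f x‖ ^ 2‖ ≤
      4 ^ (finrank ℝ E + 3) * ‖(M₀ x).toReal * (M₂ x).toReal‖ := by
    filter_upwards [ae_hardyLittlewoodMaximal_enorm_lt_top μ hp hfp,
      ae_hardyLittlewoodMaximal_enorm_lt_top μ hq hfq] with x h₀ h₂
    have := ENNReal.toReal_mono (by finiteness)
      (enorm_fderiv_sq_le_hardyLittlewoodMaximal_mul μ hf h₀.ne h₂.ne)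
    simpa [norm_iteratedFDeriv_one] using this
  have : ENNReal.HolderTriple p q (r / 2) :=
    ⟨by rw [hpqr, ENNReal.inv_div (by simp) (by simp), div_eq_mul_inv]⟩
  calc eLpNorm (iteratedFDeriv ℝ 1 f) r μ ^ 2
      = eLpNorm (fun x ↦ ‖iteratedFDeriv ℝ 1 f x‖ ^ 2) (r / 2) μ := (eLpNorm_norm_sq _ r).symm
    _ ≤ 4 ^ (finrank ℝ E + 3) * eLpNorm (fun x ↦ (M₀ x).toReal * (M₂ x).toReal) (r / 2) μ := by
        simpa [ENNReal.ofReal_pow] using eLpNorm_le_mul_eLpNorm_of_ae_le_mul hlandau (r / 2)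
    _ ≤ 4 ^ (finrank ℝ E + 3) * (eLpNorm M₀ p μ * eLpNorm M₂ q μ) := by
        gcongr
        exact (eLpNorm_smul_le_mul_eLpNorm hM₂.ennreal_toReal.aestronglyMeasurable
          hM₀.ennreal_toReal.aestronglyMeasurable).trans
            (mul_le_mul' (eLpNorm_toReal_le M₀ p) (eLpNorm_toReal_le M₂ q))
    _ ≤ 4 ^ (finrank ℝ E + 3) *
          (C₀ * eLpNorm f p μ * (C₂ * eLpNorm (iteratedFDeriv ℝ 2 f) q μ)) := by gcongr
    _ = _ := by push_cast; ring

end LandauInequality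

section LogConvexSequence

variable {y : ℕ → ℝ≥0}

lemma pow_succ_le_mul_pow_of_sq_le_mul {n : ℕ}
    (h : ∀ j < n, y (j + 1) ^ 2 ≤ y j * y (j + 2)) :
    y n ^ (n + 1) ≤ y 0 * y (n + 1) ^ n := by
  induction n with
  | zero => simp
  | succ n ih =>
    rcases eq_zero_or_pos (y (n + 1)) with h₀ | hpos
    · simp [h₀]
    refine le_of_mul_le_mul_left ?_ (pow_pos hpos n)
    calc y (n + 1) ^ n * y (n + 1) ^ (n + 2) = (y (n + 1) ^ 2) ^ (n + 1) := by ring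
      _ ≤ (y n * y (n + 2)) ^ (n + 1) := by gcongr; exact h n n.lt_succ_self
      _ = y n ^ (n + 1) * y (n + 2) ^ (n + 1) := mul_pow ..
      _ ≤ y 0 * y (n + 1) ^ n * y (n + 2) ^ (n + 1) := by
          gcongr; exact ih fun j hj ↦ h j (hj.trans n.lt_succ_self)
      _ = y (n + 1) ^ n * (y 0 * y (n + 2) ^ (n + 1)) := by ring

lemma pow_add_le_mul_pow_of_sq_le_mul {a b : ℕ}
    (h : ∀ j, j + 2 ≤ a + b → y (j + 1) ^ 2 ≤ y j * y (j + 2)) :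
    y a ^ (a + b) ≤ y 0 ^ b * y (a + b) ^ a := by
  induction b with
  | zero => simp
  | succ b ih =>
    rcases eq_or_ne (a + b) 0 with hab | hab
    · obtain ⟨rfl, rfl⟩ := add_eq_zero.1 hab
      simp
    refine le_of_pow_le_pow_left₀ hab zero_le ?_
    calc (y a ^ (a + b + 1)) ^ (a + b) = (y a ^ (a + b)) ^ (a + b + 1) := by ring
      _ ≤ (y 0 ^ b * y (a + b) ^ a) ^ (a + b + 1) := by gcongr; exact ih fun j hj ↦ h j (by lia)
      _ = y 0 ^ (b * (a + b + 1)) * (y (a + b) ^ (a + b + 1)) ^ a := by ring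
      _ ≤ y 0 ^ (b * (a + b + 1)) * (y 0 * y (a + b + 1) ^ (a + b)) ^ a := by
          gcongr; exact pow_succ_le_mul_pow_of_sq_le_mul fun j hj ↦ h j (by lia)
      _ = (y 0 ^ (b + 1) * y (a + b + 1) ^ a) ^ (a + b) := by ring

lemma pow_add_le_mul_pow_of_sq_le_const_mul {c : ℝ≥0} (hc : 1 ≤ c) {a b : ℕ}
    (h : ∀ j, j + 2 ≤ a + b → y (j + 1) ^ 2 ≤ c ^ 2 * (y j * y (j + 2))) :
    y a ^ (a + b) ≤ c ^ ((a + b) ^ 2 * a) * (y 0 ^ b * y (a + b) ^ a) := by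
  -- The weights `c ^ j ^ 2` absorb the constant: their logarithms have second difference `2 log c`.
  let w (j : ℕ) : ℝ≥0 := c ^ j ^ 2 * y j
  have hw (j : ℕ) (hj : j + 2 ≤ a + b) : w (j + 1) ^ 2 ≤ w j * w (j + 2) := by
    calc w (j + 1) ^ 2 = c ^ (2 * (j + 1) ^ 2) * y (j + 1) ^ 2 := by ring
      _ ≤ c ^ (2 * (j + 1) ^ 2) * (c ^ 2 * (y j * y (j + 2))) := by gcongr; exact h j hj
      _ = w j * w (j + 2) := by ring
  calc y a ^ (a + b) ≤ w a ^ (a + b) := by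
        gcongr; exact le_mul_of_one_le_left zero_le (one_le_pow₀ hc)
    _ ≤ w 0 ^ b * w (a + b) ^ a := pow_add_le_mul_pow_of_sq_le_mul hw
    _ = c ^ ((a + b) ^ 2 * a) * (y 0 ^ b * y (a + b) ^ a) := by
        simp only [w, zero_pow two_ne_zero, pow_zero, one_mul, mul_pow, ← pow_mul]
        ring

end LogConvexSequence

section GagliardoNirenberg

open scoped SchwartzMap

variable {E F : Type*} [NormedAddCommGroup E] [NormedSpace ℝ E] [NormedAddCommGroup F]
  [NormedSpace ℝ F]

lemma norm_iteratedFDeriv_iteratedFDeriv {𝕜 E F : Type*} [NontriviallyNormedField 𝕜]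
    [NormedAddCommGroup E] [NormedSpace 𝕜 E] [NormedAddCommGroup F] [NormedSpace 𝕜 F]
    (f : E → F) (m n : ℕ) (x : E) :
    ‖iteratedFDeriv 𝕜 m (iteratedFDeriv 𝕜 n f) x‖ = ‖iteratedFDeriv 𝕜 (n + m) f x‖ := by
  induction n generalizing m with
  | zero =>
    rw [zero_add, iteratedFDeriv_zero_eq_comp]
    exact LinearIsometryEquiv.norm_iteratedFDeriv_comp_left _ f x m
  | succ n ih =>
    have hcurry := LinearIsometryEquiv.norm_iteratedFDeriv_comp_left (𝕜 := 𝕜)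
      (F := E →L[𝕜] E [×n]→L[𝕜] F) (G := E [×(n + 1)]→L[𝕜] F)
      (continuousMultilinearCurryLeftEquiv 𝕜 (fun _ ↦ E) F).symm
      (fderiv 𝕜 (iteratedFDeriv 𝕜 n f)) x m
    rw [iteratedFDeriv_succ_eq_comp_left, add_assoc, add_comm 1, ← ih, ← norm_iteratedFDeriv_fderiv]
    exact hcurry

/-- The iterated derivative `∇ʲ f` of a Schwartz function, as a Schwartz function with values in
the multilinear maps. -/
noncomputable def schwartzIteratedFDeriv (j : ℕ) (f : 𝓢(E, F)) : 𝓢(E, E [×j]→L[ℝ] F) where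
  toFun := iteratedFDeriv ℝ j f
  smooth' := f.smooth'.iteratedFDeriv_right (mod_cast le_top)
  decay' k n := by
    simp only [norm_iteratedFDeriv_iteratedFDeriv]
    exact f.decay' k (j + n)

/-- The exponent `s` with `1 / s = (b / (a + b)) / p + (a / (a + b)) / q`, which belongs to the
derivative of order `a` when one interpolates between order `0` in `Lᵖ` and order `a + b` in
`L^q`. -/
noncomputable def interpExponent (a b : ℕ) (p q : ℝ≥0∞) : ℝ≥0∞ :=
  ((b * p⁻¹ + a * q⁻¹) / (a + b : ℕ))⁻¹

section InterpExponent

variable {a b : ℕ} {p q : ℝ≥0∞}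

lemma inv_interpExponent : (interpExponent a b p q)⁻¹ = (b * p⁻¹ + a * q⁻¹) / (a + b : ℕ) :=
  inv_inv _

lemma interpExponent_zero_left (hb : b ≠ 0) : interpExponent 0 b p q = p := by
  rw [interpExponent, Nat.cast_zero, zero_mul, add_zero, zero_add, mul_comm,
    ENNReal.mul_div_cancel_right (by simpa) (by simp), inv_inv]

lemma interpExponent_zero_right (ha : a ≠ 0) : interpExponent a 0 p q = q := by
  rw [interpExponent, Nat.cast_zero, zero_mul, zero_add, add_zero, mul_comm,
    ENNReal.mul_div_cancel_right (by simpa) (by simp), inv_inv]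

lemma min_le_interpExponent : min p q ≤ interpExponent a b p q := by
  rw [← ENNReal.inv_le_inv, inv_interpExponent]
  refine ENNReal.div_le_of_le_mul ?_
  calc b * p⁻¹ + a * q⁻¹ ≤ b * (min p q)⁻¹ + a * (min p q)⁻¹ := by
        gcongr
        exacts [min_le_left _ _, min_le_right _ _]
    _ = (min p q)⁻¹ * (a + b : ℕ) := by push_cast; ring

lemma inv_interpExponent_add_inv_interpExponent (a b : ℕ) (p q : ℝ≥0∞) :
    (interpExponent a (b + 2) p q)⁻¹ + (interpExponent (a + 2) b p q)⁻¹ =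
      2 * (interpExponent (a + 1) (b + 1) p q)⁻¹ := by
  simp only [inv_interpExponent, add_right_comm a _ b, ← add_assoc, ← ENNReal.add_div,
    ← mul_div_assoc]
  congr 1
  push_cast
  ring

end InterpExponent

variable [FiniteDimensional ℝ E] [MeasurableSpace E] [BorelSpace E] (μ : Measure E)
  [μ.IsAddHaarMeasure] {p q r : ℝ≥0∞}

lemma memLp_iteratedFDeriv (f : 𝓢(E, F)) (j : ℕ) (p : ℝ≥0∞) : MemLp (iteratedFDeriv ℝ j f) p μ :=
  (schwartzIteratedFDeriv j f).memLp p μ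

lemma eLpNorm_iteratedFDeriv_succ_sq_le [CompleteSpace F] (hp : 1 < p) (hq : 1 < q)
    (hpqr : p⁻¹ + q⁻¹ = 2 * r⁻¹) (j : ℕ) :
    ∃ C : ℝ≥0, ∀ f : 𝓢(E, F), eLpNorm (iteratedFDeriv ℝ (j + 1) f) r μ ^ 2 ≤
      C * (eLpNorm (iteratedFDeriv ℝ j f) p μ * eLpNorm (iteratedFDeriv ℝ (j + 2) f) q μ) := by
  obtain ⟨C, hC⟩ := eLpNorm_iteratedFDeriv_one_sq_le (F := E [×j]→L[ℝ] F) μ hp hq hpqr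
  refine ⟨C, fun f ↦ ?_⟩
  have hadd (m : ℕ) (p : ℝ≥0∞) : eLpNorm (iteratedFDeriv ℝ m (iteratedFDeriv ℝ j f)) p μ =
      eLpNorm (iteratedFDeriv ℝ (j + m) f) p μ :=
    eLpNorm_congr_norm_ae (.of_forall fun x ↦ norm_iteratedFDeriv_iteratedFDeriv _ _ _ x)
  rw [← hadd, ← hadd]
  exact hC _ ((schwartzIteratedFDeriv j f).smooth 2) (memLp_iteratedFDeriv μ f j p)
    (memLp_iteratedFDeriv μ (schwartzIteratedFDeriv j f) 2 q)

lemma eLpNorm_iteratedFDeriv_interpExponent_succ_sq_le [CompleteSpace F] (hp : 1 < p)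
    (hq : 1 < q) (i m : ℕ) :
    ∃ c : ℝ≥0, 1 ≤ c ∧ ∀ f : 𝓢(E, F), ∀ j, j + 2 ≤ m →
      eLpNorm (iteratedFDeriv ℝ (i + (j + 1)) f) (interpExponent (j + 1) (m - (j + 1)) p q) μ ^ 2 ≤
        c ^ 2 * (eLpNorm (iteratedFDeriv ℝ (i + j) f) (interpExponent j (m - j) p q) μ *
          eLpNorm (iteratedFDeriv ℝ (i + (j + 2)) f)
            (interpExponent (j + 2) (m - (j + 2)) p q) μ) := by
  let s (j : ℕ) : ℝ≥0∞ := interpExponent j (m - j) p q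
  have hs (j : ℕ) : 1 < s j := (lt_min hp hq).trans_le min_le_interpExponent
  have hmid (j : ℕ) (hj : j + 2 ≤ m) : (s j)⁻¹ + (s (j + 2))⁻¹ = 2 * (s (j + 1))⁻¹ := by
    obtain ⟨l, rfl⟩ := Nat.exists_eq_add_of_le hj
    convert inv_interpExponent_add_inv_interpExponent j l p q using 5 <;> lia
  have hstep (j : ℕ) : ∃ C : ℝ≥0, j + 2 ≤ m → ∀ f : 𝓢(E, F),
      eLpNorm (iteratedFDeriv ℝ (i + j + 1) f) (s (j + 1)) μ ^ 2 ≤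
        C * (eLpNorm (iteratedFDeriv ℝ (i + j) f) (s j) μ *
          eLpNorm (iteratedFDeriv ℝ (i + j + 2) f) (s (j + 2)) μ) := by
    by_cases hj : j + 2 ≤ m
    · obtain ⟨C, hC⟩ := eLpNorm_iteratedFDeriv_succ_sq_le (F := F) μ (hs j) (hs (j + 2))
        (hmid j hj) (i + j)
      exact ⟨C, fun _ ↦ hC⟩
    · exact ⟨0, fun h ↦ absurd h hj⟩
  choose C hC using hstep
  let c : ℝ≥0 := 1 + ∑ j ∈ Finset.range m, C j
  have hc : 1 ≤ c := le_self_add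
  refine ⟨c, hc, fun f j hj ↦ (hC j hj f).trans ?_⟩
  have hCc : C j ≤ c ^ 2 :=
    calc C j ≤ ∑ j ∈ Finset.range m, C j :=
          Finset.single_le_sum (fun _ _ ↦ zero_le) (Finset.mem_range.2 (by lia))
      _ ≤ c := le_add_self
      _ ≤ c ^ 2 := le_self_pow₀ hc two_ne_zero
  exact mul_le_mul_left (mod_cast hCc) _

lemma eLpNorm_iteratedFDeriv_pow_le [CompleteSpace F] (hp : 1 < p) (hq : 1 < q) (i a b : ℕ) :
    ∃ C : ℝ≥0, ∀ f : 𝓢(E, F),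
      eLpNorm (iteratedFDeriv ℝ (i + a) f) (interpExponent a b p q) μ ^ (a + b) ≤
        C * (eLpNorm (iteratedFDeriv ℝ i f) p μ ^ b *
          eLpNorm (iteratedFDeriv ℝ (i + (a + b)) f) q μ ^ a) := by
  rcases eq_or_ne (a + b) 0 with hab | hab
  · obtain ⟨rfl, rfl⟩ := add_eq_zero.1 hab
    exact ⟨1, fun f ↦ by simp⟩
  obtain ⟨c, hc, hstep⟩ :=
    eLpNorm_iteratedFDeriv_interpExponent_succ_sq_le (F := F) μ hp hq i (a + b)
  refine ⟨c ^ ((a + b) ^ 2 * a), fun f ↦ ?_⟩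
  let y (j : ℕ) : ℝ≥0 :=
    (eLpNorm (iteratedFDeriv ℝ (i + j) f) (interpExponent j (a + b - j) p q) μ).toNNReal
  have hy (j : ℕ) : (y j : ℝ≥0∞) =
      eLpNorm (iteratedFDeriv ℝ (i + j) f) (interpExponent j (a + b - j) p q) μ :=
    ENNReal.coe_toNNReal (memLp_iteratedFDeriv μ f _ _).eLpNorm_ne_top
  have hsq (j : ℕ) (hj : j + 2 ≤ a + b) : y (j + 1) ^ 2 ≤ c ^ 2 * (y j * y (j + 2)) := by
    have := hstep f j hj
    rw [← hy, ← hy, ← hy] at this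
    exact_mod_cast this
  have hpow : (y a : ℝ≥0∞) ^ (a + b) ≤ (c ^ ((a + b) ^ 2 * a) : ℝ≥0) * (y 0 ^ b * y (a + b) ^ a) :=
    mod_cast pow_add_le_mul_pow_of_sq_le_const_mul hc hsq
  simp only [hy, Nat.sub_zero, Nat.sub_self, add_tsub_cancel_left,
    interpExponent_zero_left hab, interpExponent_zero_right hab] at hpow
  exact hpow

end GagliardoNirenberg

section CommutatorEstimate

open Finset.HasAntidiagonal (antidiagonal mem_antidiagonal)
open scoped SchwartzMap

variable {E F : Type*} [NormedAddCommGroup E] [NormedSpace ℝ E] [NormedAddCommGroup F]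
  [NormedSpace ℝ F]

lemma norm_iteratedFDeriv_smul_sub_smul_le {g : E → ℝ} {h : E → F} {k : ℕ}
    (hg : ContDiff ℝ (k + 1 : ℕ) g) (hh : ContDiff ℝ (k + 1 : ℕ) h) (x : E) :
    ‖iteratedFDeriv ℝ (k + 1) (fun y ↦ g y • h y) x - g x • iteratedFDeriv ℝ (k + 1) h x‖ ≤
      ∑ ab ∈ antidiagonal k, ((k + 1).choose (ab.1 + 1) : ℝ) *
        (‖iteratedFDeriv ℝ (ab.1 + 1) g x‖ * ‖iteratedFDeriv ℝ ab.2 h x‖) := by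
  have hu : ContDiff ℝ (k + 1 : ℕ) (fun y ↦ g y - g x) := hg.sub contDiff_const
  have hgh : ContDiff ℝ (k + 1 : ℕ) (fun y ↦ g y • h y) := hg.smul hh
  have hcomm : iteratedFDeriv ℝ (k + 1) (fun y ↦ g y • h y) x -
      g x • iteratedFDeriv ℝ (k + 1) h x =
      iteratedFDeriv ℝ (k + 1) (fun y ↦ (g y - g x) • h y) x := by
    simp only [sub_smul]
    rw [fun_iteratedFDeriv_sub_apply hgh.contDiffAt (hh.const_smul (g x)).contDiffAt]
    exact congrArg _ (iteratedFDeriv_const_smul_apply (a := g x) hh.contDiffAt).symm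
  have hderiv (j : ℕ) (hj : j ≤ k) :
      iteratedFDeriv ℝ (j + 1) (fun y ↦ g y - g x) x = iteratedFDeriv ℝ (j + 1) g x := by
    have hgj : ContDiff ℝ (j + 1 : ℕ) g := hg.of_le (by gcongr)
    rw [fun_iteratedFDeriv_sub_apply hgj.contDiffAt contDiff_const.contDiffAt,
      iteratedFDeriv_const_of_ne j.succ_ne_zero, Pi.zero_apply, sub_zero]
  rw [hcomm, Finset.Nat.sum_antidiagonal_eq_sum_range_succ_mk]
  refine (norm_iteratedFDeriv_smul_le hu hh x le_rfl).trans_eq ?_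
  rw [Finset.sum_range_succ', norm_iteratedFDeriv_zero, sub_self, norm_zero, mul_zero, zero_mul,
    add_zero]
  refine Finset.sum_congr rfl fun j hj ↦ ?_
  rw [hderiv j (Finset.mem_range_succ_iff.1 hj), Nat.add_sub_add_right, mul_assoc]

lemma inv_interpExponent_add_inv_interpExponent_swap {a b : ℕ} (hab : a + b ≠ 0)
    {r r₁ r₂ r₃ r₄ : ℝ≥0∞} (h12 : r₁⁻¹ + r₂⁻¹ = r⁻¹) (h34 : r₃⁻¹ + r₄⁻¹ = r⁻¹) :
    (interpExponent a b r₁ r₄)⁻¹ + (interpExponent b a r₃ r₂)⁻¹ = r⁻¹ := by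
  rw [inv_interpExponent, inv_interpExponent, add_comm b a, ← ENNReal.add_div]
  calc (b * r₁⁻¹ + a * r₄⁻¹ + (a * r₃⁻¹ + b * r₂⁻¹)) / (a + b : ℕ)
      = (b * (r₁⁻¹ + r₂⁻¹) + a * (r₃⁻¹ + r₄⁻¹)) / (a + b : ℕ) := by
        congr 1
        ring
    _ = r⁻¹ * (a + b : ℕ) / (a + b : ℕ) := by
        rw [h12, h34, ← add_mul, mul_comm, add_comm (b : ℝ≥0∞), Nat.cast_add]
    _ = r⁻¹ := ENNReal.mul_div_cancel_right (mod_cast hab) (ENNReal.natCast_ne_top _)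

lemma le_mul_add_of_pow_le_of_pow_le {a b : ℕ} (hab : a + b ≠ 0) {C D : ℝ≥0}
    {u v x₁ x₂ x₃ x₄ : ℝ≥0∞} (hu : u ^ (a + b) ≤ C * (x₁ ^ b * x₄ ^ a))
    (hv : v ^ (a + b) ≤ D * (x₃ ^ a * x₂ ^ b)) :
    u * v ≤ (max 1 (C * D) : ℝ≥0) * (x₁ * x₂ + x₃ * x₄) := by
  set K : ℝ≥0 := max 1 (C * D)
  have hK : (C * D : ℝ≥0∞) ≤ (K : ℝ≥0∞) ^ (a + b) :=
    mod_cast (le_max_right 1 (C * D)).trans (le_self_pow₀ (le_max_left _ _) hab)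
  refine (ENNReal.pow_le_pow_left_iff hab).1 ?_
  calc (u * v) ^ (a + b) = u ^ (a + b) * v ^ (a + b) := mul_pow ..
    _ ≤ C * (x₁ ^ b * x₄ ^ a) * (D * (x₃ ^ a * x₂ ^ b)) := mul_le_mul' hu hv
    _ = C * D * ((x₃ * x₄) ^ a * (x₁ * x₂) ^ b) := by ring
    _ ≤ K ^ (a + b) * ((x₁ * x₂ + x₃ * x₄) ^ a * (x₁ * x₂ + x₃ * x₄) ^ b) := by
        gcongr
        exacts [le_add_self, le_self_add]
    _ = (K * (x₁ * x₂ + x₃ * x₄)) ^ (a + b) := by rw [← pow_add, mul_pow]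

variable [FiniteDimensional ℝ E] [MeasurableSpace E] [BorelSpace E] (μ : Measure E)
  [μ.IsAddHaarMeasure] {r r₁ r₂ r₃ r₄ : ℝ≥0∞}

lemma eLpNorm_norm_iteratedFDeriv_mul_le (hr : r₁⁻¹ + r₂⁻¹ = r⁻¹) (g : 𝓢(E, ℝ)) (h : 𝓢(E, F))
    (i j : ℕ) :
    eLpNorm (fun x ↦ ‖iteratedFDeriv ℝ i g x‖ * ‖iteratedFDeriv ℝ j h x‖) r μ ≤
      eLpNorm (iteratedFDeriv ℝ i g) r₁ μ * eLpNorm (iteratedFDeriv ℝ j h) r₂ μ := by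
  have : ENNReal.HolderTriple r₁ r₂ r := ⟨hr⟩
  refine (eLpNorm_smul_le_mul_eLpNorm (p := r₁) (q := r₂)
    (memLp_iteratedFDeriv μ h j r₂).aestronglyMeasurable.norm
    (memLp_iteratedFDeriv μ g i r₁).aestronglyMeasurable.norm).trans_eq ?_
  rw [eLpNorm_norm, eLpNorm_norm]

lemma exists_eLpNorm_norm_iteratedFDeriv_mul_le [CompleteSpace F] (hr : 1 < r)
    (h12 : r₁⁻¹ + r₂⁻¹ = r⁻¹) (h34 : r₃⁻¹ + r₄⁻¹ = r⁻¹) (a b : ℕ) :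
    ∃ C : ℝ≥0, ∀ (g : 𝓢(E, ℝ)) (h : 𝓢(E, F)),
      eLpNorm (fun x ↦ ‖iteratedFDeriv ℝ (a + 1) g x‖ * ‖iteratedFDeriv ℝ b h x‖) r μ ≤
        C * (eLpNorm (iteratedFDeriv ℝ 1 g) r₁ μ * eLpNorm (iteratedFDeriv ℝ (a + b) h) r₂ μ +
          eLpNorm h r₃ μ * eLpNorm (iteratedFDeriv ℝ (a + b + 1) g) r₄ μ) := by
  rcases eq_or_ne (a + b) 0 with hab | hab
  · obtain ⟨rfl, rfl⟩ := add_eq_zero.1 hab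
    refine ⟨1, fun g h ↦ ?_⟩
    rw [ENNReal.coe_one, one_mul]
    exact (eLpNorm_norm_iteratedFDeriv_mul_le μ h12 g h 1 0).trans le_self_add
  have hlt {p : ℝ≥0∞} (hp : p⁻¹ ≤ r⁻¹) : 1 < p := hr.trans_le (ENNReal.inv_le_inv.1 hp)
  obtain ⟨C, hC⟩ := eLpNorm_iteratedFDeriv_pow_le (F := ℝ) μ
    (hlt (h12 ▸ le_self_add)) (hlt (h34 ▸ le_add_self)) 1 a b
  obtain ⟨D, hD⟩ := eLpNorm_iteratedFDeriv_pow_le (F := F) μ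
    (hlt (h34 ▸ le_self_add)) (hlt (h12 ▸ le_add_self)) 0 b a
  refine ⟨max 1 (C * D), fun g h ↦ ?_⟩
  have hg := hC g
  have hh := hD h
  have hh₀ : eLpNorm (iteratedFDeriv ℝ 0 h) r₃ μ = eLpNorm h r₃ μ :=
    eLpNorm_congr_norm_ae (.of_forall fun _ ↦ norm_iteratedFDeriv_zero)
  rw [add_comm b a, zero_add, zero_add, hh₀] at hh
  rw [add_comm 1, add_comm 1] at hg
  exact (eLpNorm_norm_iteratedFDeriv_mul_le μ
    (inv_interpExponent_add_inv_interpExponent_swap hab h12 h34) g h (a + 1) b).trans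
    (le_mul_add_of_pow_le_of_pow_le hab hg hh)

theorem commutator_leibniz_estimate_general [CompleteSpace F] {k : ℕ} (hk : 1 ≤ k) (hr : 1 < r)
    (h12 : r₁⁻¹ + r₂⁻¹ = r⁻¹) (h34 : r₃⁻¹ + r₄⁻¹ = r⁻¹) :
    ∃ C : ℝ≥0, 0 < C ∧ ∀ (g : 𝓢(E, ℝ)) (h : 𝓢(E, F)),
      eLpNorm
          (fun x ↦ iteratedFDeriv ℝ k (fun y ↦ g y • h y) x - g x • iteratedFDeriv ℝ k h x) r μ ≤
        C * eLpNorm (iteratedFDeriv ℝ 1 g) r₁ μ * eLpNorm (iteratedFDeriv ℝ (k - 1) h) r₂ μ +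
          C * eLpNorm h r₃ μ * eLpNorm (iteratedFDeriv ℝ k g) r₄ μ := by
  obtain ⟨k, rfl⟩ := Nat.exists_eq_add_of_le' hk
  choose C hC using exists_eLpNorm_norm_iteratedFDeriv_mul_le (F := F) μ hr h12 h34
  let K : ℝ≥0 := ∑ ab ∈ antidiagonal k, (k + 1).choose (ab.1 + 1) * C ab.1 ab.2
  refine ⟨1 + K, by positivity, fun g h ↦ ?_⟩
  let t (ab : ℕ × ℕ) (x : E) : ℝ :=
    ‖iteratedFDeriv ℝ (ab.1 + 1) g x‖ * ‖iteratedFDeriv ℝ ab.2 h x‖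
  have ht (ab : ℕ × ℕ) : AEStronglyMeasurable (t ab) μ :=
    (memLp_iteratedFDeriv μ g (ab.1 + 1) r).aestronglyMeasurable.norm.mul
      (memLp_iteratedFDeriv μ h ab.2 r).aestronglyMeasurable.norm
  rw [Nat.add_sub_cancel, mul_assoc, mul_assoc, ← mul_add]
  set S : ℝ≥0∞ := eLpNorm (iteratedFDeriv ℝ 1 g) r₁ μ * eLpNorm (iteratedFDeriv ℝ k h) r₂ μ +
    eLpNorm h r₃ μ * eLpNorm (iteratedFDeriv ℝ (k + 1) g) r₄ μ with hS
  have hterm : ∀ ab ∈ antidiagonal k, eLpNorm (t ab) r μ ≤ C ab.1 ab.2 * S := by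
    intro ab hab
    rw [hS, ← mem_antidiagonal.1 hab]
    exact hC ab.1 ab.2 g h
  calc eLpNorm (fun x ↦ iteratedFDeriv ℝ (k + 1) (fun y ↦ g y • h y) x -
          g x • iteratedFDeriv ℝ (k + 1) h x) r μ
      ≤ eLpNorm (∑ ab ∈ antidiagonal k, ((k + 1).choose (ab.1 + 1) : ℝ) • t ab) r μ :=
        eLpNorm_mono_real fun x ↦ by
          simpa only [Finset.sum_apply, Pi.smul_apply, smul_eq_mul] using
            norm_iteratedFDeriv_smul_sub_smul_le (g.smooth _) (h.smooth _) x
    _ ≤ ∑ ab ∈ antidiagonal k, eLpNorm (((k + 1).choose (ab.1 + 1) : ℝ) • t ab) r μ :=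
        eLpNorm_sum_le (fun ab _ ↦ (ht ab).const_smul _) hr.le
    _ = ∑ ab ∈ antidiagonal k, (k + 1).choose (ab.1 + 1) * eLpNorm (t ab) r μ := by
        simp only [eLpNorm_const_smul, Real.enorm_natCast]
    _ ≤ ∑ ab ∈ antidiagonal k, (k + 1).choose (ab.1 + 1) * (C ab.1 ab.2 * S) := by
        gcongr with ab hab
        exact hterm ab hab
    _ = K * S := by simp [K, Finset.sum_mul, mul_assoc]
    _ ≤ (1 + K : ℝ≥0) * S := by gcongr; exact le_add_self

end CommutatorEstimate

/-- Commutator estimate: for exponents `1 < r, r₂, r₄ < ∞`, `1 ≤ r₁, r₃ ≤ ∞` with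
`1/r₁ + 1/r₂ = 1/r₃ + 1/r₄ = 1/r` and every `k ≥ 1`, there is `C > 0` such that
`‖∇^k(gh) − g∇^k h‖_{L^r} ≤ C ‖∇g‖_{L^{r₁}} ‖∇^{k−1} h‖_{L^{r₂}} + C ‖h‖_{L^{r₃}} ‖∇^k g‖_{L^{r₄}}`. -/
theorem commutator_leibniz_estimate (k : ℕ) (hk : 1 ≤ k) (r r₁ r₂ r₃ r₄ : ℝ≥0∞)
    (hr : 1 < r) (hr' : r < ⊤) (hr₂ : 1 < r₂) (hr₂' : r₂ < ⊤)
    (hr₄ : 1 < r₄) (hr₄' : r₄ < ⊤) (hr₁ : 1 ≤ r₁) (hr₃ : 1 ≤ r₃)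
    (h12 : 1 / r₁ + 1 / r₂ = 1 / r) (h34 : 1 / r₃ + 1 / r₄ = 1 / r) :
    ∃ C : ℝ≥0, 0 < C ∧ ∀ g h : SchwartzMap (EuclideanSpace ℝ (Fin 3)) ℝ,
      eLpNorm
          (fun x => iteratedFDeriv ℝ k (fun y => g y * h y) x - g x • iteratedFDeriv ℝ k (⇑h) x)
          r volume ≤
        (C : ℝ≥0∞) * eLpNorm (iteratedFDeriv ℝ 1 ⇑g) r₁ volume
            * eLpNorm (iteratedFDeriv ℝ (k - 1) ⇑h) r₂ volume
          + (C : ℝ≥0∞) * eLpNorm (⇑h) r₃ volume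
              * eLpNorm (iteratedFDeriv ℝ k ⇑g) r₄ volume :=
  commutator_leibniz_estimate_general volume hk hr (by simpa using h12) (by simpa using h34)
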